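/- Let V be a real Hilbert space, K a compact subset of V, and let (u^k)_{k≥0} be a weak greedy sequence in K with parameter γ ∈ (0,1]. If for some s > 0 and c0, C0 > 0 the Kolmogorov widths satisfy d_n(K) ≤ C0·e^{-c0·n^s} for all n ≥ 0, then there exist constants C1, c1 > 0 depending only on C0, c0, s and γ such that for every ε > 0, the smallest integer n(ε) with σ_{n(ε)}(K) ≤ ε satisfies n(ε) ≤ C1·(max{ln(1/(c1·ε)), 0})^{1/s}. -/

import Mathlib

/-- The Kolmogorov `n`-width of a set `K` in a real inner product space:
the infimum over all subspaces `E` of dimension at most `n` of the worst-case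
distance `‖u - P_E u‖ = infDist u E` over `u ∈ K`. -/
noncomputable def kolWidth {V : Type*} [NormedAddCommGroup V] [InnerProductSpace ℝ V]
    (K : Set V) (n : ℕ) : ℝ :=
  ⨅ E : {E : Submodule ℝ V // Module.rank ℝ E ≤ (n : Cardinal)},
    ⨆ u ∈ K, Metric.infDist u (E.1 : Set V)

/-- The greedy error `σ_n(K) = sup_{x ∈ K} ‖x - P_{V_n} x‖` where
`V_n = span{u^0, …, u^{n-1}}`. -/
noncomputable def greedyErr {V : Type*} [NormedAddCommGroup V] [InnerProductSpace ℝ V]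
    (u : ℕ → V) (K : Set V) (n : ℕ) : ℝ :=
  ⨆ x ∈ K, Metric.infDist x (Submodule.span ℝ (u '' Set.Iio n) : Set V)

/-- `u` is a weak greedy sequence for `K` with parameter `γ`:
`‖u^n - P_{V_n} u^n‖ ≥ γ · σ_n(K)` for all `n`. -/
def IsWeakGreedy {V : Type*} [NormedAddCommGroup V] [InnerProductSpace ℝ V]
    (u : ℕ → V) (K : Set V) (γ : ℝ) : Prop :=
  ∀ n : ℕ, γ * greedyErr u K n ≤
    Metric.infDist (u n) (Submodule.span ℝ (u '' Set.Iio n) : Set V)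

universe u

/-!
The distances `dist(u_i, V_i)` are the norms of the Gram–Schmidt vectors of `u`, so their product
over `i < n` is the volume form `D` of the orthonormalized family, evaluated at
`(u_0, …, u_{n-1})`. For a near-optimal subspace `E` of dimension at most `m`, split
`u_i = P_E u_i + (u_i - P_E u_i)` and expand `D` multilinearly. Terms with more than `m` entries in
`E` vanish because `D` is alternating; Hadamard's inequality bounds each of the others by
`d_0 ^ m * d_m ^ (n - m)`, and there are at most `2 ^ n` of them. The weak greedy condition and the
monotonicity of `σ` bound the product below by `(γ * σ_n) ^ n`, and `n = 2 * m` yields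
`γ * σ_{2m} ≤ 2 * √(d_0 * d_m)`, into which the decay of `d_m` is substituted.
-/

open Module

theorem pow_mul_pow_sub_le_pow_mul_pow_sub {R : Type*} [CommSemiring R] [PartialOrder R]
    [IsOrderedRing R] {a b : R} (ha : 0 ≤ a) (hab : a ≤ b) {k m n : ℕ} (hkm : k ≤ m)
    (hmn : m ≤ n) : b ^ k * a ^ (n - k) ≤ b ^ m * a ^ (n - m) := by
  have hb : 0 ≤ b := ha.trans hab
  calc b ^ k * a ^ (n - k) = b ^ k * a ^ (m - k) * a ^ (n - m) := by
        rw [mul_assoc, ← pow_add]; congr 2; omega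
    _ ≤ b ^ k * b ^ (m - k) * a ^ (n - m) := by gcongr
    _ = b ^ m * a ^ (n - m) := by rw [← pow_add, Nat.add_sub_cancel' hkm]

section Alternating

variable {ι R V F : Type*}

theorem alternatingMap_eq_zero_of_rank_lt_card [Ring R] [IsDomain R] [AddCommGroup V] [Module R V]
    [AddCommGroup F] [Module R F] [IsTorsionFree R F] (D : V [⋀^ι]→ₗ[R] F) {E : Submodule R V}
    {S : Finset ι} (hES : Module.rank R E < S.card) {v : ι → V} (hv : ∀ i ∈ S, v i ∈ E) :
    D v = 0 := by
  refine D.map_linearDependent v fun hindep => hES.not_ge ?_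
  have hindep_E : LinearIndependent R fun i : S => (⟨v i, hv i i.2⟩ : E) :=
    .of_comp E.subtype (hindep.comp _ Subtype.val_injective)
  simpa using hindep_E.cardinal_lift_le_rank

variable [Fintype ι]

theorem prod_norm_piecewise_le [DecidableEq ι] [SeminormedAddCommGroup V] {p q : ι → V} {B δ : ℝ}
    (hp : ∀ i, ‖p i‖ ≤ B) (hq : ∀ i, ‖q i‖ ≤ δ) (S : Finset ι) :
    ∏ i, ‖S.piecewise p q i‖ ≤ B ^ S.card * δ ^ (Fintype.card ι - S.card) := by
  calc ∏ i, ‖S.piecewise p q i‖ ≤ ∏ i, S.piecewise (fun _ => B) (fun _ => δ) i := by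
        refine Finset.prod_le_prod (fun i _ => norm_nonneg _) fun i _ => ?_
        by_cases hi : i ∈ S <;> simp [hi, hp, hq]
    _ = B ^ S.card * δ ^ (Fintype.card ι - S.card) := by
        simp [Finset.prod_piecewise, ← Finset.compl_eq_univ_sdiff, Finset.card_compl]

theorem norm_alternatingMap_add_le [Ring R] [IsDomain R] [SeminormedAddCommGroup V] [Module R V]
    [SeminormedAddCommGroup F] [Module R F] [IsTorsionFree R F] {D : V [⋀^ι]→ₗ[R] F}
    (hD : ∀ v, ‖D v‖ ≤ ∏ i, ‖v i‖) {E : Submodule R V} {m : ℕ} (hE : Module.rank R E ≤ m)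
    (hm : m ≤ Fintype.card ι) {p q : ι → V} (hpE : ∀ i, p i ∈ E) {B δ : ℝ} (hδ : 0 ≤ δ)
    (hδB : δ ≤ B) (hpB : ∀ i, ‖p i‖ ≤ B) (hqδ : ∀ i, ‖q i‖ ≤ δ) :
    ‖D (p + q)‖ ≤ 2 ^ Fintype.card ι * (B ^ m * δ ^ (Fintype.card ι - m)) := by
  classical
  have hB : 0 ≤ B := hδ.trans hδB
  have hterm : ∀ S : Finset ι, ‖D (S.piecewise p q)‖ ≤ B ^ m * δ ^ (Fintype.card ι - m) := by
    intro S
    rcases lt_or_ge m S.card with hmS | hSm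
    · rw [alternatingMap_eq_zero_of_rank_lt_card D (hE.trans_lt (Nat.cast_lt.2 hmS))
        fun i hi => by simp [hi, hpE], norm_zero]
      positivity
    · exact (hD _).trans <| (prod_norm_piecewise_le hpB hqδ S).trans <|
        pow_mul_pow_sub_le_pow_mul_pow_sub hδ hδB hSm hm
  calc ‖D (p + q)‖ ≤ ∑ S : Finset ι, ‖D (S.piecewise p q)‖ := by
        rw [D.map_add_univ]; exact norm_sum_le _ _
    _ ≤ ∑ _S : Finset ι, B ^ m * δ ^ (Fintype.card ι - m) := Finset.sum_le_sum fun S _ => hterm S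
    _ = 2 ^ Fintype.card ι * (B ^ m * δ ^ (Fintype.card ι - m)) := by simp

end Alternating

section Volume

variable {𝕜 ι V : Type*} [RCLike 𝕜] [NormedAddCommGroup V] [InnerProductSpace 𝕜 V] [Fintype ι]

theorem norm_orthonormalBasis_det_le [DecidableEq ι] (b : OrthonormalBasis ι 𝕜 V) (v : ι → V) :
    ‖b.toBasis.det v‖ ≤ ∏ i, ‖v i‖ := by
  let _ : LinearOrder ι := LinearOrder.lift' (Fintype.equivFin ι) (Fintype.equivFin ι).injective
  obtain rfl : ‹DecidableEq ι› = LinearOrder.toDecidableEq := Subsingleton.elim _ _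
  let _ : LocallyFiniteOrderBot ι :=
    .ofIic' ι (fun a => Finset.univ.filter (· ≤ a)) (by simp)
  have : FiniteDimensional 𝕜 V := b.toBasis.finiteDimensional_of_finite
  let g := InnerProductSpace.gramSchmidtOrthonormalBasis (finrank_eq_card_basis b.toBasis) v
  have hdet : b.toBasis.det v = b.toBasis.det g * ∏ i, inner 𝕜 (g i) (v i) := by
    rw [← InnerProductSpace.gramSchmidtOrthonormalBasis_det]
    simpa using DFunLike.congr_fun (b.toBasis.det.eq_smul_basis_det g.toBasis) v
  rw [hdet, norm_mul, b.det_to_matrix_orthonormalBasis g, one_mul, norm_prod]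
  refine Finset.prod_le_prod (fun _ _ => norm_nonneg _) fun i _ => ?_
  simpa using norm_inner_le_norm (𝕜 := 𝕜) (g i) (v i)

variable (𝕜) in
/-- The volume form of an orthonormal family `e`, extended to the ambient space by orthogonal
projection onto the span of `e`: the determinant of the coordinates `⟪e j, v i⟫`. -/
noncomputable def orthonormalVolume [DecidableEq ι] (e : ι → V) : V [⋀^ι]→ₗ[𝕜] 𝕜 :=
  Matrix.detRowAlternating.compLinearMap (LinearMap.pi fun j => innerₛₗ 𝕜 (e j))

theorem orthonormalVolume_apply [DecidableEq ι] (e v : ι → V) :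
    orthonormalVolume 𝕜 e v = (Matrix.of fun i j => inner 𝕜 (e j) (v i)).det := rfl

theorem norm_orthonormalVolume_le [DecidableEq ι] {e : ι → V} (he : Orthonormal 𝕜 e) (v : ι → V) :
    ‖orthonormalVolume 𝕜 e v‖ ≤ ∏ i, ‖v i‖ := by
  let w : ι → EuclideanSpace 𝕜 ι := fun i => WithLp.toLp 2 fun j => inner 𝕜 (e j) (v i)
  have hdet : orthonormalVolume 𝕜 e v = (EuclideanSpace.basisFun ι 𝕜).toBasis.det w := by
    rw [orthonormalVolume_apply, Basis.det_apply, ← Matrix.det_transpose]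
    rfl
  have hbessel : ∀ i, ‖w i‖ ≤ ‖v i‖ := by
    intro i
    rw [EuclideanSpace.norm_eq]
    exact Real.sqrt_le_iff.2 ⟨norm_nonneg _, he.sum_inner_products_le (v i)⟩
  rw [hdet]
  exact (norm_orthonormalBasis_det_le _ w).trans <|
    Finset.prod_le_prod (fun _ _ => norm_nonneg _) fun i _ => hbessel i

end Volume

section InfDist

theorem infDist_submodule_le_norm {R V : Type*} [Semiring R] [SeminormedAddCommGroup V]
    [Module R V] (E : Submodule R V) (x : V) : Metric.infDist x (E : Set V) ≤ ‖x‖ := by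
  simpa using Metric.infDist_le_dist_of_mem (x := x) E.zero_mem

theorem iSup_infDist_nonneg {X : Type*} [PseudoMetricSpace X] (K s : Set X) :
    0 ≤ ⨆ x ∈ K, Metric.infDist x s :=
  Real.iSup_nonneg fun _ => Real.iSup_nonneg fun _ => Metric.infDist_nonneg

theorem infDist_le_iSup_infDist {R V : Type*} [Semiring R] [SeminormedAddCommGroup V] [Module R V]
    {K : Set V} (hK : Bornology.IsBounded K) (E : Submodule R V) {x : V} (hx : x ∈ K) :
    Metric.infDist x (E : Set V) ≤ ⨆ y ∈ K, Metric.infDist y (E : Set V) := by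
  obtain ⟨R, hR⟩ := hK.exists_norm_le
  refine le_ciSup₂ (f := fun y (_ : y ∈ K) => Metric.infDist y (E : Set V)) ⟨R, ?_⟩ x hx
  simp only [mem_upperBounds, Set.mem_iUnion, Set.mem_range]
  rintro _ ⟨y, hy, rfl⟩
  exact (infDist_submodule_le_norm E y).trans (hR y hy)

theorem norm_sub_starProjection_eq_infDist {𝕜 V : Type*} [RCLike 𝕜] [NormedAddCommGroup V]
    [InnerProductSpace 𝕜 V] (E : Submodule 𝕜 V) [E.HasOrthogonalProjection] (x : V) :
    ‖x - E.starProjection x‖ = Metric.infDist x (E : Set V) := by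
  rw [Submodule.starProjection_minimal, Metric.infDist_eq_iInf]
  simp [dist_eq_norm]

end InfDist

section GramSchmidt

open InnerProductSpace

variable {𝕜 ι V : Type*} [RCLike 𝕜] [NormedAddCommGroup V] [InnerProductSpace 𝕜 V]
  [LinearOrder ι] [LocallyFiniteOrderBot ι] [WellFoundedLT ι]

theorem norm_gramSchmidt_eq_infDist (u : ι → V) (i : ι) :
    ‖gramSchmidt 𝕜 u i‖ = Metric.infDist (u i) (Submodule.span 𝕜 (u '' Set.Iio i) : Set V) := by
  have : FiniteDimensional 𝕜 (Submodule.span 𝕜 (u '' Set.Iio i)) :=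
    .span_of_finite 𝕜 ((Set.finite_Iio i).image u)
  have hmem : u i - gramSchmidt 𝕜 u i ∈ Submodule.span 𝕜 (u '' Set.Iio i) := by
    rw [← span_gramSchmidt_Iio 𝕜 u i, sub_eq_iff_eq_add'.2 (gramSchmidt_def'' 𝕜 u i)]
    exact Submodule.sum_mem _ fun k hk => Submodule.smul_mem _ _ <|
      Submodule.subset_span ⟨k, by simpa using hk, rfl⟩
  have horth : gramSchmidt 𝕜 u i ∈ (Submodule.span 𝕜 (u '' Set.Iio i))ᗮ := by
    rw [← span_gramSchmidt_Iio 𝕜 u i, ← Submodule.span_singleton_le_iff_mem]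
    refine Submodule.isOrtho_span.2 ?_
    rintro _ rfl _ ⟨k, hk, rfl⟩
    exact gramSchmidt_orthogonal 𝕜 u (ne_of_gt hk)
  rw [← norm_sub_starProjection_eq_infDist,
    Submodule.eq_starProjection_of_mem_orthogonal hmem (by rwa [sub_sub_cancel]),
    sub_sub_cancel]

theorem inner_gramSchmidt_self (u : ι → V) (i : ι) :
    inner 𝕜 (gramSchmidt 𝕜 u i) (u i) = (‖gramSchmidt 𝕜 u i‖ : 𝕜) ^ 2 := by
  rw [gramSchmidt_def'' 𝕜 u i, inner_add_right, inner_sum, Finset.sum_eq_zero, add_zero,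
    inner_self_eq_norm_sq_to_K]
  intro k hk
  rw [inner_smul_right, gramSchmidt_orthogonal 𝕜 u (Finset.mem_Iio.1 hk).ne', mul_zero]

theorem orthonormalVolume_gramSchmidtNormed [Fintype ι] (u : ι → V) :
    orthonormalVolume 𝕜 (gramSchmidtNormed 𝕜 u) u = ∏ i, (‖gramSchmidt 𝕜 u i‖ : 𝕜) := by
  rw [orthonormalVolume_apply, Matrix.det_of_isLowerTriangular]
  · refine Finset.prod_congr rfl fun i _ => ?_
    rw [Matrix.of_apply, gramSchmidtNormed, inner_smul_left, inner_gramSchmidt_self]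
    rcases eq_or_ne (gramSchmidt 𝕜 u i) 0 with h | h
    · simp [h]
    · have hnorm : (‖gramSchmidt 𝕜 u i‖ : 𝕜) ≠ 0 := by simpa using h
      rw [map_inv₀, RCLike.conj_ofReal, sq, inv_mul_cancel_left₀ hnorm]
  · intro i j hij
    simp [gramSchmidtNormed, inner_smul_left,
      gramSchmidt_inv_triangular 𝕜 u (OrderDual.toDual_lt_toDual.1 hij)]

theorem prod_infDist_span_Iio_le [Fintype ι] (u : ι → V) {E : Submodule 𝕜 V} {m : ℕ}
    (hE : Module.rank 𝕜 E ≤ m) (hm : m ≤ Fintype.card ι) {B δ : ℝ} (hB : 0 ≤ B) (hδ : 0 ≤ δ)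
    (huB : ∀ i, ‖u i‖ ≤ B) (huE : ∀ i, Metric.infDist (u i) (E : Set V) ≤ δ) :
    ∏ i, Metric.infDist (u i) (Submodule.span 𝕜 (u '' Set.Iio i) : Set V) ≤
      2 ^ Fintype.card ι * (B ^ m * δ ^ (Fintype.card ι - m)) := by
  have : FiniteDimensional 𝕜 E := rank_lt_aleph0_iff.1 (hE.trans_lt Cardinal.natCast_lt_aleph0)
  simp_rw [← norm_gramSchmidt_eq_infDist]
  by_cases! hzero : ∃ i, gramSchmidt 𝕜 u i = 0
  · obtain ⟨i, hi⟩ := hzero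
    rw [Finset.prod_eq_zero (Finset.mem_univ i) (by rw [hi, norm_zero])]
    positivity
  have horth : Orthonormal 𝕜 (gramSchmidtNormed 𝕜 u) :=
    (gramSchmidtNormed_orthonormal' u).comp
      (fun i => ⟨i, by simpa [gramSchmidtNormed] using hzero i⟩) fun _ _ h => congrArg Subtype.val h
  -- Projecting shortens, so `δ` can be lowered to `min δ B`, as `norm_alternatingMap_add_le` needs.
  have hperp : ∀ i, ‖u i - E.starProjection (u i)‖ ≤ min δ B := by
    intro i
    rw [norm_sub_starProjection_eq_infDist]
    exact le_min (huE i) ((infDist_submodule_le_norm E (u i)).trans (huB i))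
  calc ∏ i, ‖gramSchmidt 𝕜 u i‖ = ‖orthonormalVolume 𝕜 (gramSchmidtNormed 𝕜 u) u‖ := by
        rw [orthonormalVolume_gramSchmidtNormed]; simp
    _ = ‖orthonormalVolume 𝕜 (gramSchmidtNormed 𝕜 u)
          ((fun i => E.starProjection (u i)) + fun i => u i - E.starProjection (u i))‖ := by
        congr 2; ext i; simp
    _ ≤ 2 ^ Fintype.card ι * (B ^ m * min δ B ^ (Fintype.card ι - m)) :=
        norm_alternatingMap_add_le (norm_orthonormalVolume_le horth) hE hm
          (fun i => E.starProjection_apply_mem (u i)) (le_min hδ hB) (min_le_right _ _)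
          (fun i => (E.norm_starProjection_apply_le _).trans (huB i)) hperp
    _ ≤ 2 ^ Fintype.card ι * (B ^ m * δ ^ (Fintype.card ι - m)) := by
        gcongr; exact min_le_left _ _

end GramSchmidt

section Widths

variable {V : Type*} [NormedAddCommGroup V] [InnerProductSpace ℝ V] {K : Set V}

theorem kolWidth_nonneg (K : Set V) (n : ℕ) : 0 ≤ kolWidth K n :=
  Real.iInf_nonneg fun E => iSup_infDist_nonneg K E.1

theorem norm_le_kolWidth_zero (hK : Bornology.IsBounded K) {x : V} (hx : x ∈ K) :
    ‖x‖ ≤ kolWidth K 0 := by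
  have : Nonempty {E : Submodule ℝ V // Module.rank ℝ E ≤ ((0 : ℕ) : Cardinal)} := ⟨⟨⊥, by simp⟩⟩
  refine le_ciInf fun ⟨E, hE⟩ => ?_
  obtain rfl : E = ⊥ := Submodule.rank_eq_zero.1 (by simpa using hE)
  simpa using infDist_le_iSup_infDist hK (⊥ : Submodule ℝ V) hx

theorem exists_submodule_of_kolWidth_lt (hK : Bornology.IsBounded K) {n : ℕ} {δ : ℝ}
    (hδ : kolWidth K n < δ) :
    ∃ E : Submodule ℝ V, Module.rank ℝ E ≤ n ∧ ∀ x ∈ K, Metric.infDist x (E : Set V) ≤ δ := by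
  have : Nonempty {E : Submodule ℝ V // Module.rank ℝ E ≤ (n : Cardinal)} := ⟨⟨⊥, by simp⟩⟩
  obtain ⟨E, hE⟩ := exists_lt_of_ciInf_lt hδ
  exact ⟨E, E.2, fun x hx => (infDist_le_iSup_infDist hK E.1 hx).trans hE.le⟩

theorem greedyErr_nonneg (u : ℕ → V) (K : Set V) (n : ℕ) : 0 ≤ greedyErr u K n :=
  iSup_infDist_nonneg K _

theorem antitone_greedyErr (hK : Bornology.IsBounded K) (u : ℕ → V) :
    Antitone (greedyErr u K) := by
  intro i n hin
  have hspan : Submodule.span ℝ (u '' Set.Iio i) ≤ Submodule.span ℝ (u '' Set.Iio n) :=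
    Submodule.span_mono (Set.image_mono (Set.Iio_subset_Iio hin))
  refine Real.iSup_le (fun x => Real.iSup_le (fun hx => ?_) ?_) ?_
  · exact (Metric.infDist_le_infDist_of_subset hspan ⟨0, Submodule.zero_mem _⟩).trans
      (infDist_le_iSup_infDist hK _ hx)
  all_goals exact greedyErr_nonneg u K i

theorem prod_infDist_span_Iio_le_kolWidth (hK : Bornology.IsBounded K) {u : ℕ → V}
    (hu : ∀ n, u n ∈ K) {m n : ℕ} (hmn : m ≤ n) :
    ∏ i : Fin n, Metric.infDist (u i) (Submodule.span ℝ (u '' Set.Iio (i : ℕ)) : Set V) ≤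
      2 ^ n * (kolWidth K 0 ^ m * kolWidth K m ^ (n - m)) := by
  have himage : ∀ i : Fin n, (fun j : Fin n => u j) '' Set.Iio i = u '' Set.Iio (i : ℕ) := by
    intro i
    rw [← Fin.image_val_Iio, Set.image_image]
  have hbound : ∀ δ > kolWidth K m,
      ∏ i : Fin n, Metric.infDist (u i) (Submodule.span ℝ (u '' Set.Iio (i : ℕ)) : Set V) ≤
        2 ^ n * (kolWidth K 0 ^ m * δ ^ (n - m)) := by
    intro δ hδ
    obtain ⟨E, hE, hKE⟩ := exists_submodule_of_kolWidth_lt hK hδ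
    simpa [himage] using prod_infDist_span_Iio_le (fun i : Fin n => u i) hE (by simpa using hmn)
      (kolWidth_nonneg K 0) ((kolWidth_nonneg K m).trans hδ.le)
      (fun i => norm_le_kolWidth_zero hK (hu i)) (fun i => hKE _ (hu i))
  have hlim : Filter.Tendsto (fun δ : ℝ => 2 ^ n * (kolWidth K 0 ^ m * δ ^ (n - m)))
      (nhdsWithin (kolWidth K m) (Set.Ioi (kolWidth K m)))
      (nhds (2 ^ n * (kolWidth K 0 ^ m * kolWidth K m ^ (n - m)))) :=
    (Continuous.tendsto (by fun_prop) _).mono_left nhdsWithin_le_nhds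
  exact ge_of_tendsto hlim (Filter.eventually_of_mem self_mem_nhdsWithin hbound)

namespace IsWeakGreedy

variable {u : ℕ → V} {γ : ℝ}

theorem mul_greedyErr_pow_le (hw : IsWeakGreedy u K γ) (hγ : 0 ≤ γ) (hK : Bornology.IsBounded K)
    (hu : ∀ n, u n ∈ K) {m n : ℕ} (hmn : m ≤ n) :
    (γ * greedyErr u K n) ^ n ≤ 2 ^ n * (kolWidth K 0 ^ m * kolWidth K m ^ (n - m)) := by
  refine le_trans ?_ (prod_infDist_span_Iio_le_kolWidth hK hu hmn)
  calc (γ * greedyErr u K n) ^ n = ∏ _i : Fin n, γ * greedyErr u K n := by simp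
    _ ≤ ∏ i : Fin n, Metric.infDist (u i) (Submodule.span ℝ (u '' Set.Iio (i : ℕ)) : Set V) := by
      refine Finset.prod_le_prod (fun _ _ => mul_nonneg hγ (greedyErr_nonneg u K n)) fun i _ => ?_
      exact (mul_le_mul_of_nonneg_left (antitone_greedyErr hK u i.2.le) hγ).trans (hw i)

theorem mul_greedyErr_zero_le (hw : IsWeakGreedy u K γ) (hK : Bornology.IsBounded K)
    (hu : u 0 ∈ K) : γ * greedyErr u K 0 ≤ kolWidth K 0 :=
  (hw 0).trans <| (infDist_submodule_le_norm _ _).trans (norm_le_kolWidth_zero hK hu)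

theorem mul_greedyErr_two_mul_le (hw : IsWeakGreedy u K γ) (hγ : 0 ≤ γ)
    (hK : Bornology.IsBounded K) (hu : ∀ n, u n ∈ K) (m : ℕ) :
    γ * greedyErr u K (2 * m) ≤ 2 * √(kolWidth K 0 * kolWidth K m) := by
  have hd : 0 ≤ kolWidth K 0 * kolWidth K m :=
    mul_nonneg (kolWidth_nonneg K 0) (kolWidth_nonneg K m)
  rcases eq_or_ne m 0 with rfl | hm
  · have := hw.mul_greedyErr_zero_le hK (hu 0)
    rw [Real.sqrt_mul_self (kolWidth_nonneg K 0)]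
    linarith [kolWidth_nonneg K 0]
  refine le_of_pow_le_pow_left₀ (n := 2 * m) (by omega) (by positivity) ?_
  calc (γ * greedyErr u K (2 * m)) ^ (2 * m)
      ≤ 2 ^ (2 * m) * (kolWidth K 0 ^ m * kolWidth K m ^ (2 * m - m)) :=
        hw.mul_greedyErr_pow_le hγ hK hu (by omega)
    _ = (2 * √(kolWidth K 0 * kolWidth K m)) ^ (2 * m) := by
        rw [mul_pow, pow_mul √_ 2 m, Real.sq_sqrt hd, mul_pow, two_mul, Nat.add_sub_cancel]

theorem greedyErr_two_mul_le_exp (hw : IsWeakGreedy u K γ) (hγ : 0 < γ)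
    (hK : Bornology.IsBounded K) (hu : ∀ n, u n ∈ K) {c₀ C₀ s : ℝ} (hC₀ : 0 ≤ C₀) (hs : s ≠ 0)
    (hd : ∀ n : ℕ, kolWidth K n ≤ C₀ * Real.exp (-(c₀ * (n : ℝ) ^ s))) (m : ℕ) :
    greedyErr u K (2 * m) ≤ 2 * C₀ / γ * Real.exp (-(c₀ / 2 * (m : ℝ) ^ s)) := by
  have hd_zero : kolWidth K 0 ≤ C₀ := by simpa [Real.zero_rpow hs] using hd 0
  have hsqrt : √(kolWidth K 0 * kolWidth K m) ≤ C₀ * Real.exp (-(c₀ / 2 * (m : ℝ) ^ s)) := by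
    refine Real.sqrt_le_iff.2 ⟨by positivity, ?_⟩
    calc kolWidth K 0 * kolWidth K m ≤ C₀ * (C₀ * Real.exp (-(c₀ * (m : ℝ) ^ s))) :=
          mul_le_mul hd_zero (hd m) (kolWidth_nonneg K m) hC₀
      _ = (C₀ * Real.exp (-(c₀ / 2 * (m : ℝ) ^ s))) ^ 2 := by
          rw [mul_pow, ← Real.exp_nat_mul]
          ring_nf
  rw [div_mul_eq_mul_div, le_div_iff₀' hγ]
  linarith [hw.mul_greedyErr_two_mul_le hγ.le hK hu m]

end IsWeakGreedy

end Widths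

theorem exists_nat_le_mul_rpow {a s L : ℝ} (ha : 0 < a) (hs : 0 < s) (hL : 1 ≤ L) :
    ∃ m : ℕ, L ≤ a * (m : ℝ) ^ s ∧ (m : ℝ) ≤ ((1 / a) ^ (1 / s) + 1) * L ^ (1 / s) := by
  refine ⟨⌈(L / a) ^ (1 / s)⌉₊, ?_, ?_⟩
  · calc L = a * ((L / a) ^ (1 / s)) ^ s := by
          rw [← Real.rpow_mul (by positivity), one_div_mul_cancel hs.ne', Real.rpow_one]
          field_simp
      _ ≤ a * (⌈(L / a) ^ (1 / s)⌉₊ : ℝ) ^ s := by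
          gcongr
          exact Nat.le_ceil _
  · calc (⌈(L / a) ^ (1 / s)⌉₊ : ℝ) ≤ (L / a) ^ (1 / s) + 1 :=
          (Nat.ceil_lt_add_one (by positivity)).le
      _ ≤ (L / a) ^ (1 / s) + L ^ (1 / s) := by
          gcongr
          exact Real.one_le_rpow hL (by positivity)
      _ = ((1 / a) ^ (1 / s) + 1) * L ^ (1 / s) := by
          rw [div_eq_mul_one_div, mul_comm L, Real.mul_rpow (by positivity) (by positivity)]
          ring

/-- The factor `e` makes the logarithm at least `1` when `ε < A`, which absorbs the rounding up
of `m` to an integer. -/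
theorem exists_nat_mul_exp_neg_rpow_le {A a s ε : ℝ} (hA : 0 < A) (ha : 0 < a) (hs : 0 < s)
    (hε : 0 < ε) :
    ∃ m : ℕ, A * Real.exp (-(a * (m : ℝ) ^ s)) ≤ ε ∧
      (m : ℝ) ≤ ((1 / a) ^ (1 / s) + 1) * max (Real.log (A * Real.exp 1 / ε)) 0 ^ (1 / s) := by
  rcases le_or_gt A ε with hAε | hεA
  · exact ⟨0, by simpa [Real.zero_rpow hs.ne'] using hAε, by rw [Nat.cast_zero]; positivity⟩
  have hlog : Real.log (A * Real.exp 1 / ε) = Real.log (A / ε) + 1 := by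
    rw [mul_div_right_comm, Real.log_mul (by positivity) (by positivity), Real.log_exp]
  have hlog_nonneg : 0 ≤ Real.log (A / ε) := Real.log_nonneg ((one_le_div hε).2 hεA.le)
  obtain ⟨m, hlog_le, hm⟩ := exists_nat_le_mul_rpow ha hs (le_add_of_nonneg_left hlog_nonneg)
  refine ⟨m, ?_, ?_⟩
  · calc A * Real.exp (-(a * (m : ℝ) ^ s)) ≤ A * Real.exp (-Real.log (A / ε)) := by
          gcongr; linarith
      _ = ε := by
          rw [Real.exp_neg, Real.exp_log (by positivity)]
          field_simp
  · rwa [hlog, max_eq_left (by positivity)]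

theorem statement4_general (c0 C0 s γ : ℝ) (hc0 : 0 < c0) (hC0 : 0 < C0) (hs : 0 < s)
    (hγ : 0 < γ) :
    ∃ C1 c1 : ℝ, 0 < C1 ∧ 0 < c1 ∧
      ∀ (V : Type u) [NormedAddCommGroup V] [InnerProductSpace ℝ V]
        (K : Set V), Bornology.IsBounded K →
        ∀ u : ℕ → V, (∀ n, u n ∈ K) → IsWeakGreedy u K γ →
        (∀ n : ℕ, kolWidth K n ≤ C0 * Real.exp (-(c0 * (n : ℝ) ^ s))) →
        ∀ ε : ℝ, 0 < ε →
          {n : ℕ | greedyErr u K n ≤ ε}.Nonempty ∧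
          ((sInf {n : ℕ | greedyErr u K n ≤ ε} : ℕ) : ℝ) ≤
            C1 * (max (Real.log (1 / (c1 * ε))) 0) ^ (1 / s) := by
  set A := 2 * C0 / γ
  have hA_pos : 0 < A := by positivity
  refine ⟨2 * ((1 / (c0 / 2)) ^ (1 / s) + 1), 1 / (A * Real.exp 1), by positivity, by positivity,
    fun V _ _ K hK u hu hw hd ε hε => ?_⟩
  obtain ⟨m, hmε, hm⟩ := exists_nat_mul_exp_neg_rpow_le hA_pos (half_pos hc0) hs hε
  have hmem : greedyErr u K (2 * m) ≤ ε :=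
    (hw.greedyErr_two_mul_le_exp hγ hK hu hC0.le hs.ne' hd m).trans hmε
  have hinf : sInf {n : ℕ | greedyErr u K n ≤ ε} ≤ 2 * m := Nat.sInf_le hmem
  have harg : 1 / (1 / (A * Real.exp 1) * ε) = A * Real.exp 1 / ε := by field_simp
  refine ⟨⟨2 * m, hmem⟩, ?_⟩
  calc ((sInf {n : ℕ | greedyErr u K n ≤ ε} : ℕ) : ℝ) ≤ 2 * m := mod_cast hinf
    _ ≤ 2 * (((1 / (c0 / 2)) ^ (1 / s) + 1) *
          max (Real.log (A * Real.exp 1 / ε)) 0 ^ (1 / s)) := by gcongr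
    _ = _ := by rw [harg, mul_assoc]

theorem statement4 (c0 C0 s γ : ℝ) (hc0 : 0 < c0) (hC0 : 0 < C0) (hs : 0 < s)
    (hγ : γ ∈ Set.Ioc (0 : ℝ) 1) :
    ∃ C1 c1 : ℝ, 0 < C1 ∧ 0 < c1 ∧
      ∀ (V : Type u) [NormedAddCommGroup V] [InnerProductSpace ℝ V] [CompleteSpace V]
        (K : Set V), IsCompact K →
        ∀ u : ℕ → V, (∀ n, u n ∈ K) → IsWeakGreedy u K γ →
        (∀ n : ℕ, kolWidth K n ≤ C0 * Real.exp (-(c0 * (n : ℝ) ^ s))) →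
        ∀ ε : ℝ, 0 < ε →
          {n : ℕ | greedyErr u K n ≤ ε}.Nonempty ∧
          ((sInf {n : ℕ | greedyErr u K n ≤ ε} : ℕ) : ℝ) ≤
            C1 * (max (Real.log (1 / (c1 * ε))) 0) ^ (1 / s) := by
  obtain ⟨C1, c1, hC1, hc1, hbound⟩ := statement4_general c0 C0 s γ hc0 hC0 hs hγ.1
  exact ⟨C1, c1, hC1, hc1, fun V _ _ _ K hK => hbound V K hK.isBounded⟩
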